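/- Erdős–Kac theorem: for every real x, (1/n)·#{m : 1 ≤ m ≤ n, ω(m) - ln ln n ≤ x·√(ln ln n)} → Φ(x) as n → ∞, where Φ is the standard normal cumulative distribution function. -/

import Mathlib

open Filter MeasureTheory
open scoped Classical

/-- The standard normal cumulative distribution function. -/
noncomputable def stdNormalCDF (x : ℝ) : ℝ :=
  (Real.sqrt (2 * Real.pi))⁻¹ * ∫ t in Set.Iic x, Real.exp (-t ^ 2 / 2)

/-!
By Lévy's continuity theorem it suffices to show that the mean over `m ≤ n` of `w ^ ω(m)`, with
`w = exp (i t / √(log log n))`, is asymptotic to `exp ((w - 1) S)`, where `S` is the sum of the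
reciprocals of the primes up to a level `N = n ^ o(1)`. Primes above `N` change `w ^ ω(m)` by a
negligible amount on average. For the primes below `N`, expand
`w ^ ω(m) = ∏ p ∣ m, (1 + (w - 1))` in elementary symmetric functions of the indicators of `p ∣ m`,
truncated at degree about `log log n`. The mean of each of the few remaining terms is `1 / d` up to
`1 / n`, as if the divisibilities were independent, and both tails are small by Rankin's trick.
Mertens' theorem for `∑ 1 / p` gives `S = log log n + o(√(log log n))`, and a second order Taylor
expansion of `w` gives the Gaussian.
-/

open Asymptotics ProbabilityTheory Finset
open scoped ENNReal Topology BigOperators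

/-- The empirical distribution of `f` on the finite set `s`: the law of `f i` when `i` is drawn
uniformly from `s`. It is the zero measure if `s` is empty. -/
noncomputable def empiricalMeasure {ι Ω : Type*} [MeasurableSpace Ω] (s : Finset ι) (f : ι → Ω) :
    Measure Ω :=
  (#s : ℝ≥0∞)⁻¹ • ∑ i ∈ s, Measure.dirac (f i)

section EmpiricalMeasure

variable {ι : Type*} {s : Finset ι}

lemma isProbabilityMeasure_empiricalMeasure {Ω : Type*} [MeasurableSpace Ω] (hs : s.Nonempty)
    (f : ι → Ω) : IsProbabilityMeasure (empiricalMeasure s f) where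
  measure_univ := by
    simpa [empiricalMeasure] using
      ENNReal.inv_mul_cancel (by simpa using hs.ne_empty) (ENNReal.natCast_ne_top #s)

lemma empiricalMeasure_real_apply {Ω : Type*} [MeasurableSpace Ω] (s : Finset ι) (f : ι → Ω)
    {A : Set Ω} (hA : MeasurableSet A) :
    (empiricalMeasure s f).real A = (#{i ∈ s | f i ∈ A} : ℝ) / #s := by
  simp [empiricalMeasure, measureReal_def, Measure.dirac_apply' _ hA, Set.indicator_apply,
    ← div_eq_inv_mul]

lemma charFun_empiricalMeasure (s : Finset ι) (f : ι → ℝ) (t : ℝ) :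
    charFun (empiricalMeasure s f) t = 𝔼 i ∈ s, Complex.exp (t * f i * Complex.I) := by
  rw [charFun_apply_real, empiricalMeasure, integral_smul_measure,
    integral_finsetSum_measure fun i _ ↦ integrable_dirac (by simp [enorm_lt_top]),
    expect_eq_sum_div_card]
  simp [div_eq_inv_mul]

theorem tendsto_card_filter_le_div_card_of_charFun {s : ℕ → Finset ι} {X : ℕ → ι → ℝ}
    {μ : Measure ℝ} [IsProbabilityMeasure μ] (hs : ∀ᶠ n in atTop, (s n).Nonempty)
    (hX : ∀ t : ℝ, Tendsto (fun n ↦ 𝔼 i ∈ s n, Complex.exp (t * X n i * Complex.I)) atTop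
      (𝓝 (charFun μ t)))
    {x : ℝ} (hx : μ {x} = 0) :
    Tendsto (fun n ↦ (#{i ∈ s n | X n i ≤ x} : ℝ) / #(s n)) atTop (𝓝 (μ.real (Set.Iic x))) := by
  obtain ⟨n₀, hn₀⟩ := eventually_atTop.1 hs
  let ν (n : ℕ) : ProbabilityMeasure ℝ :=
    ⟨empiricalMeasure (s (n + n₀)) (X (n + n₀)),
      isProbabilityMeasure_empiricalMeasure (hn₀ _ (Nat.le_add_left _ _)) _⟩
  have hν : Tendsto ν atTop (𝓝 ⟨μ, inferInstance⟩) := by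
    refine ProbabilityMeasure.tendsto_iff_tendsto_charFun.2 fun t ↦ ?_
    simpa [ν, charFun_empiricalMeasure] using (tendsto_add_atTop_iff_nat n₀).2 (hX t)
  have hIic := (ENNReal.tendsto_toReal (measure_ne_top μ _)).comp <|
    ProbabilityMeasure.tendsto_measure_of_null_frontier_of_tendsto' hν (E := Set.Iic x)
      (by simpa using hx)
  refine (tendsto_add_atTop_iff_nat n₀).1 (hIic.congr fun n ↦ ?_)
  exact empiricalMeasure_real_apply (s (n + n₀)) (X (n + n₀)) measurableSet_Iic

end EmpiricalMeasure

lemma gaussianReal_real_Iic_eq_stdNormalCDF (x : ℝ) :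
    (gaussianReal 0 1).real (Set.Iic x) = stdNormalCDF x := by
  rw [measureReal_def, gaussianReal_apply_eq_integral _ one_ne_zero,
    ENNReal.toReal_ofReal (integral_nonneg fun _ ↦ gaussianPDFReal_nonneg _ _ _), stdNormalCDF,
    ← integral_const_mul]
  simp [gaussianPDFReal]

lemma norm_prod_sub_prod_le {ι R : Type*} [NormedCommRing R] [NormOneClass R] (s : Finset ι)
    {f g : ι → R} (hf : ∀ i ∈ s, ‖f i‖ ≤ 1) (hg : ∀ i ∈ s, ‖g i‖ ≤ 1) :
    ‖∏ i ∈ s, f i - ∏ i ∈ s, g i‖ ≤ ∑ i ∈ s, ‖f i - g i‖ := by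
  induction s using Finset.induction_on with
  | empty => simp
  | insert a s ha ih =>
    simp only [forall_mem_insert] at hf hg
    have hprod : ‖∏ i ∈ s, g i‖ ≤ 1 :=
      (s.norm_prod_le g).trans (prod_le_one (fun _ _ ↦ norm_nonneg _) hg.2)
    rw [prod_insert ha, prod_insert ha, sum_insert ha]
    calc ‖f a * ∏ i ∈ s, f i - g a * ∏ i ∈ s, g i‖
        = ‖(f a - g a) * ∏ i ∈ s, g i + f a * (∏ i ∈ s, f i - ∏ i ∈ s, g i)‖ := by ring_nf
      _ ≤ ‖f a - g a‖ * ‖∏ i ∈ s, g i‖ + ‖f a‖ * ‖∏ i ∈ s, f i - ∏ i ∈ s, g i‖ :=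
        (norm_add_le _ _).trans (add_le_add (norm_mul_le _ _) (norm_mul_le _ _))
      _ ≤ ‖f a - g a‖ + ∑ i ∈ s, ‖f i - g i‖ :=
        add_le_add (mul_le_of_le_one_right (norm_nonneg _) hprod)
          ((mul_le_of_le_one_left (norm_nonneg _) hf.1).trans (ih hf.2 hg.2))

lemma norm_pow_sub_one_le {R : Type*} [NormedCommRing R] [NormOneClass R] {w : R} (hw : ‖w‖ ≤ 1)
    (k : ℕ) : ‖w ^ k - 1‖ ≤ k * ‖w - 1‖ := by
  simpa using norm_prod_sub_prod_le (range k) (f := fun _ ↦ w) (g := fun _ ↦ 1)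
    (fun _ _ ↦ hw) (by simp)

lemma norm_one_add_smul_le_one {R : Type*} [NormedRing R] [NormOneClass R] [NormedAlgebra ℝ R]
    {z : R} (hz : ‖1 + z‖ ≤ 1) {a : ℝ} (ha₀ : 0 ≤ a) (ha₁ : a ≤ 1) : ‖1 + a • z‖ ≤ 1 :=
  calc ‖1 + a • z‖ = ‖(1 - a) • (1 : R) + a • (1 + z)‖ := by congr 1; module
    _ ≤ (1 - a) * 1 + a * 1 := by
      refine (norm_add_le _ _).trans ?_
      rw [norm_smul, norm_smul, norm_one, Real.norm_of_nonneg ha₀,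
        Real.norm_of_nonneg (sub_nonneg.2 ha₁)]
      gcongr
    _ = 1 := by ring

lemma norm_sub_one_le_two {R : Type*} [NormedRing R] [NormOneClass R] {w : R} (hw : ‖w‖ ≤ 1) :
    ‖w - 1‖ ≤ 2 :=
  (norm_sub_le _ _).trans (by rw [norm_one]; linarith)

section Esymm

@[simp]
lemma esymm_zero_right {R : Type*} [CommSemiring R] (s : Multiset R) : s.esymm 0 = 1 := by
  simp [Multiset.esymm]

@[simp]
lemma esymm_zero_left_succ {R : Type*} [CommSemiring R] (j : ℕ) :
    (0 : Multiset R).esymm (j + 1) = 0 := by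
  rw [Multiset.esymm, Multiset.powersetCard_eq_empty _ (by simp), Multiset.map_zero,
    Multiset.sum_zero]

lemma esymm_cons_succ {R : Type*} [CommSemiring R] (a : R) (s : Multiset R) (j : ℕ) :
    (a ::ₘ s).esymm (j + 1) = s.esymm (j + 1) + a * s.esymm j := by
  simp [Multiset.esymm, Multiset.powersetCard_cons, Multiset.sum_map_mul_left]

variable {s : Multiset ℝ}

lemma esymm_nonneg (hs : ∀ a ∈ s, 0 ≤ a) (j : ℕ) : 0 ≤ s.esymm j := by
  refine Multiset.sum_nonneg fun y hy ↦ ?_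
  obtain ⟨t, ht, rfl⟩ := Multiset.mem_map.1 hy
  exact Multiset.prod_nonneg fun a ha ↦
    hs a (Multiset.mem_of_le (Multiset.mem_powersetCard.1 ht).1 ha)

lemma pow_mul_esymm_le_exp (hs : ∀ a ∈ s, 0 ≤ a) {x : ℝ} (hx : 0 ≤ x) (j : ℕ) :
    x ^ j * s.esymm j ≤ Real.exp (x * s.sum) := by
  induction s using Multiset.induction_on generalizing j with
  | empty => cases j <;> simp
  | cons a s ih =>
    rw [Multiset.forall_mem_cons] at hs
    have hxa : 0 ≤ x * a := mul_nonneg hx hs.1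
    rw [Multiset.sum_cons, mul_add, Real.exp_add]
    cases j with
    | zero =>
      rw [pow_zero, one_mul, esymm_zero_right]
      exact one_le_mul_of_one_le_of_one_le (Real.one_le_exp hxa) (by simpa using ih hs.2 0)
    | succ j =>
      calc x ^ (j + 1) * (a ::ₘ s).esymm (j + 1)
          = x ^ (j + 1) * s.esymm (j + 1) + x * a * (x ^ j * s.esymm j) := by
            rw [esymm_cons_succ]; ring
        _ ≤ Real.exp (x * s.sum) + x * a * Real.exp (x * s.sum) := by gcongr <;> exact ih hs.2 _
        _ = (x * a + 1) * Real.exp (x * s.sum) := by ring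
        _ ≤ Real.exp (x * a) * Real.exp (x * s.sum) := by gcongr; exact Real.add_one_le_exp _

-- Rankin's trick: weighting by `exp j` makes the degree `j` part exponentially small.
lemma pow_mul_esymm_le_exp_sub (hs : ∀ a ∈ s, 0 ≤ a) {x : ℝ} (hx : 0 ≤ x) (j : ℕ) :
    x ^ j * s.esymm j ≤ Real.exp (Real.exp 1 * x * s.sum - j) := by
  rw [Real.exp_sub, le_div_iff₀ (Real.exp_pos _), ← Real.exp_one_pow]
  calc x ^ j * s.esymm j * Real.exp 1 ^ j = (Real.exp 1 * x) ^ j * s.esymm j := by ring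
    _ ≤ _ := pow_mul_esymm_le_exp hs (by positivity) j

lemma sum_esymm_cons_smul_pow {R : Type*} [CommRing R] [Algebra ℝ R] (a : ℝ) (s : Multiset ℝ)
    (z : R) (k : ℕ) :
    ∑ j ∈ range (k + 1), (a ::ₘ s).esymm j • z ^ j =
      (1 + a • z) * ∑ j ∈ range (k + 1), s.esymm j • z ^ j - (a * s.esymm k) • z ^ (k + 1) := by
  induction k with
  | zero => simp
  | succ k ih =>
    rw [sum_range_succ, ih, sum_range_succ (fun j ↦ s.esymm j • z ^ j) (k + 1), esymm_cons_succ]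
    simp only [Algebra.smul_def, map_add, map_mul]
    ring

lemma norm_prod_map_one_add_smul_sub_sum_esymm_le {R : Type*} [NormedCommRing R] [NormOneClass R]
    [NormedAlgebra ℝ R] {z : R} (hs : ∀ a ∈ s, 0 ≤ a) (hz : ∀ a ∈ s, ‖1 + a • z‖ ≤ 1) (k : ℕ) :
    ‖(s.map fun a ↦ 1 + a • z).prod - ∑ j ∈ range (k + 1), s.esymm j • z ^ j‖ ≤
      ‖z‖ ^ (k + 1) * s.esymm (k + 1) := by
  induction s using Multiset.induction_on with
  | empty => simp [sum_range_succ']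
  | cons a s ih =>
    rw [Multiset.forall_mem_cons] at hs hz
    rw [Multiset.map_cons, Multiset.prod_cons, sum_esymm_cons_smul_pow, esymm_cons_succ]
    calc ‖(1 + a • z) * (s.map fun a ↦ 1 + a • z).prod -
          ((1 + a • z) * ∑ j ∈ range (k + 1), s.esymm j • z ^ j - (a * s.esymm k) • z ^ (k + 1))‖
        = ‖(1 + a • z) * ((s.map fun a ↦ 1 + a • z).prod -
            ∑ j ∈ range (k + 1), s.esymm j • z ^ j) + (a * s.esymm k) • z ^ (k + 1)‖ := by ring_nf
      _ ≤ ‖z‖ ^ (k + 1) * s.esymm (k + 1) + a * s.esymm k * ‖z‖ ^ (k + 1) := by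
        refine (norm_add_le _ _).trans (add_le_add ((norm_mul_le _ _).trans <|
          (mul_le_of_le_one_left (norm_nonneg _) hz.1).trans (ih hs.2 hz.2)) ?_)
        rw [norm_smul, Real.norm_of_nonneg (mul_nonneg hs.1 (esymm_nonneg hs.2 k))]
        exact mul_le_mul_of_nonneg_left (norm_pow_le _ _) (mul_nonneg hs.1 (esymm_nonneg hs.2 k))
      _ = ‖z‖ ^ (k + 1) * (s.esymm (k + 1) + a * s.esymm k) := by ring

lemma norm_prod_one_add_smul_sub_sum_esymm_le {ι R : Type*} [NormedCommRing R] [NormOneClass R]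
    [NormedAlgebra ℝ R] (s : Finset ι) {a : ι → ℝ} (ha₀ : ∀ i, 0 ≤ a i) (ha₁ : ∀ i, a i ≤ 1) {z : R}
    (hz : ‖1 + z‖ ≤ 1) (k : ℕ) :
    ‖∏ i ∈ s, (1 + a i • z) - ∑ j ∈ range (k + 1), (s.val.map a).esymm j • z ^ j‖ ≤
      ‖z‖ ^ (k + 1) * (s.val.map a).esymm (k + 1) := by
  simpa using norm_prod_map_one_add_smul_sub_sum_esymm_le (s := s.val.map a)
    (by simpa using fun i _ ↦ ha₀ i)
    (by simpa using fun i _ ↦ norm_one_add_smul_le_one hz (ha₀ i) (ha₁ i)) k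

end Esymm

lemma norm_exp_ofReal_mul_le_one {z : ℂ} (hz : ‖1 + z‖ ≤ 1) {a : ℝ} (ha : 0 ≤ a) :
    ‖Complex.exp (a * z)‖ ≤ 1 := by
  have hre : z.re ≤ 0 := by simpa using (Complex.re_le_norm (1 + z)).trans hz
  rw [Complex.norm_exp, Real.exp_le_one_iff, Complex.re_ofReal_mul]
  exact mul_nonpos_of_nonneg_of_nonpos ha hre

lemma norm_prod_one_add_smul_sub_exp_le {ι : Type*} (s : Finset ι) {a : ι → ℝ} {z : ℂ}
    (hz : ‖1 + z‖ ≤ 1) (ha₀ : ∀ i ∈ s, 0 ≤ a i) (ha₁ : ∀ i ∈ s, a i ≤ 1 / 2) :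
    ‖∏ i ∈ s, (1 + a i • z) - Complex.exp ((∑ i ∈ s, a i : ℝ) * z)‖ ≤
      (∑ i ∈ s, a i ^ 2) * ‖z‖ ^ 2 := by
  have hz₂ : ‖z‖ ≤ 2 := by simpa using norm_sub_one_le_two hz
  rw [Complex.ofReal_sum, sum_mul, Complex.exp_sum, sum_mul]
  refine (norm_prod_sub_prod_le s (fun i hi ↦ norm_one_add_smul_le_one hz (ha₀ i hi) ?_)
    fun i hi ↦ norm_exp_ofReal_mul_le_one hz (ha₀ i hi)).trans (sum_le_sum fun i hi ↦ ?_)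
  · linarith [ha₁ i hi]
  have hnorm : ‖(a i : ℂ) * z‖ = a i * ‖z‖ := by
    rw [norm_mul, Complex.norm_real, Real.norm_of_nonneg (ha₀ i hi)]
  have hle : ‖(a i : ℂ) * z‖ ≤ 1 := by
    rw [hnorm]; nlinarith [ha₀ i hi, ha₁ i hi, norm_nonneg z]
  calc ‖1 + a i • z - Complex.exp (a i * z)‖ = ‖Complex.exp (a i * z) - 1 - a i * z‖ := by
        rw [norm_sub_rev, Complex.real_smul, sub_sub]
    _ ≤ a i ^ 2 * ‖z‖ ^ 2 := by
      rw [← mul_pow, ← hnorm]; exact Complex.norm_exp_sub_one_sub_id_le hle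

lemma natCast_div_lt_natCast_div_add_one (n d : ℕ) : (n : ℝ) / d < (n / d : ℕ) + 1 := by
  simpa [Nat.floor_div_eq_div] using Nat.lt_floor_add_one ((n : ℝ) / d)

/-- The real-valued indicator of `p ∣ m`, viewed as a function of `p`. Averaged over `m`, it behaves
like a Bernoulli variable of parameter `1 / p`. -/
def dvdIndicator (m p : ℕ) : ℝ := if p ∣ m then 1 else 0

section Sieve

lemma dvdIndicator_nonneg (m p : ℕ) : 0 ≤ dvdIndicator m p := by
  unfold dvdIndicator; split_ifs <;> norm_num

lemma dvdIndicator_le_one (m p : ℕ) : dvdIndicator m p ≤ 1 := by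
  unfold dvdIndicator; split_ifs <;> norm_num

variable {P : Finset ℕ}

lemma prod_one_add_dvdIndicator_smul (P : Finset ℕ) (m : ℕ) (z : ℂ) :
    ∏ p ∈ P, (1 + dvdIndicator m p • z) = (1 + z) ^ #{p ∈ P | p ∣ m} := by
  simp [dvdIndicator, ite_smul, add_ite, prod_ite]

lemma prod_dvdIndicator (hP : ∀ p ∈ P, p.Prime) (m : ℕ) :
    ∏ p ∈ P, dvdIndicator m p = dvdIndicator m (∏ p ∈ P, p) := by
  have hdvd : (∀ p ∈ P, p ∣ m) ↔ ∏ p ∈ P, p ∣ m :=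
    ⟨prod_primes_dvd m fun p hp ↦ (hP p hp).prime, fun h p hp ↦ (dvd_prod_of_mem _ hp).trans h⟩
  simp only [dvdIndicator, prod_ite_zero, prod_const_one, hdvd]

lemma expect_dvdIndicator (n d : ℕ) :
    𝔼 m ∈ Icc 1 n, dvdIndicator m d = (n / d : ℕ) / (n : ℝ) := by
  simp only [expect_eq_sum_div_card, dvdIndicator, sum_boole, Nat.card_Icc, add_tsub_cancel_right]
  rw [← Nat.Ioc_filter_dvd_card_eq_div]
  rfl

lemma expect_dvdIndicator_le (n d : ℕ) : 𝔼 m ∈ Icc 1 n, dvdIndicator m d ≤ (d : ℝ)⁻¹ := by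
  rw [expect_dvdIndicator]
  refine div_le_of_le_mul₀ (by positivity) (by positivity) ?_
  simpa [div_eq_inv_mul] using Nat.cast_div_le (α := ℝ) (m := n) (n := d)

lemma inv_sub_expect_dvdIndicator_le {n : ℕ} (hn : n ≠ 0) (d : ℕ) :
    (d : ℝ)⁻¹ - 𝔼 m ∈ Icc 1 n, dvdIndicator m d ≤ (n : ℝ)⁻¹ := by
  have hn₀ : (0 : ℝ) < n := by positivity
  have hfloor := natCast_div_lt_natCast_div_add_one n d
  rw [expect_dvdIndicator, sub_le_iff_le_add', ← one_div (n : ℝ), ← add_div, le_div_iff₀ hn₀]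
  rw [div_eq_inv_mul] at hfloor
  exact hfloor.le

lemma expect_esymm_dvdIndicator (hP : ∀ p ∈ P, p.Prime) (n j : ℕ) :
    𝔼 m ∈ Icc 1 n, (P.val.map (dvdIndicator m)).esymm j =
      ∑ S ∈ P.powersetCard j, 𝔼 m ∈ Icc 1 n, dvdIndicator m (∏ p ∈ S, p) := by
  simp only [esymm_map_val, expect_sum_comm]
  refine sum_congr rfl fun S hS ↦ expect_congr rfl fun m _ ↦ prod_dvdIndicator (fun p hp ↦ ?_) m
  exact hP p ((mem_powersetCard.1 hS).1 hp)

lemma esymm_inv_eq_sum (P : Finset ℕ) (j : ℕ) :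
    (P.val.map fun p : ℕ ↦ (p : ℝ)⁻¹).esymm j =
      ∑ S ∈ P.powersetCard j, ((∏ p ∈ S, p : ℕ) : ℝ)⁻¹ := by
  simp [esymm_map_val]

lemma expect_esymm_dvdIndicator_le (hP : ∀ p ∈ P, p.Prime) (n j : ℕ) :
    𝔼 m ∈ Icc 1 n, (P.val.map (dvdIndicator m)).esymm j ≤
      (P.val.map fun p : ℕ ↦ (p : ℝ)⁻¹).esymm j := by
  rw [expect_esymm_dvdIndicator hP, esymm_inv_eq_sum]
  exact sum_le_sum fun S _ ↦ expect_dvdIndicator_le n _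

lemma abs_expect_esymm_dvdIndicator_sub_le (hP : ∀ p ∈ P, p.Prime) {n : ℕ} (hn : n ≠ 0) (j : ℕ) :
    |𝔼 m ∈ Icc 1 n, (P.val.map (dvdIndicator m)).esymm j -
      (P.val.map fun p : ℕ ↦ (p : ℝ)⁻¹).esymm j| ≤ (#P).choose j / n := by
  rw [abs_sub_comm, abs_of_nonneg (sub_nonneg.2 (expect_esymm_dvdIndicator_le hP n j)),
    expect_esymm_dvdIndicator hP, esymm_inv_eq_sum, ← sum_sub_distrib, ← card_powersetCard,
    div_eq_mul_inv, ← nsmul_eq_mul]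
  exact sum_le_card_nsmul _ _ _ fun S _ ↦ inv_sub_expect_dvdIndicator_le hn _

lemma sum_pow_mul_choose_le {x : ℝ} (hx : 0 ≤ x) {M N : ℕ} (hMN : M ≤ N) (hN : 1 ≤ N) (k : ℕ) :
    ∑ j ∈ range (k + 1), x ^ j * M.choose j ≤ Real.exp x * N ^ k := by
  have hN₁ : (1 : ℝ) ≤ N := mod_cast hN
  calc ∑ j ∈ range (k + 1), x ^ j * M.choose j
      ≤ ∑ j ∈ range (k + 1), x ^ j / j.factorial * (N : ℝ) ^ k := by
        refine sum_le_sum fun j hj ↦ ?_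
        rw [div_mul_eq_mul_div, ← mul_div_assoc']
        gcongr
        refine (Nat.choose_le_pow_div j M).trans ?_
        gcongr 1
        exact (pow_le_pow_left₀ (by positivity) (mod_cast hMN) j).trans
          (pow_le_pow_right₀ hN₁ (Nat.lt_succ_iff.1 (mem_range.1 hj)))
    _ ≤ Real.exp x * N ^ k := by
        rw [← sum_mul]; gcongr; exact Real.sum_le_exp_of_nonneg hx (k + 1)

lemma pow_mul_esymm_inv_le_exp (P : Finset ℕ) {x : ℝ} (hx : 0 ≤ x) (k : ℕ) :
    x ^ k * (P.val.map fun p : ℕ ↦ (p : ℝ)⁻¹).esymm k ≤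
      Real.exp (Real.exp 1 * x * ∑ p ∈ P, (p : ℝ)⁻¹ - k) := by
  simpa using pow_mul_esymm_le_exp_sub (s := P.val.map fun p : ℕ ↦ (p : ℝ)⁻¹) (by simp) hx k

lemma norm_pow_card_dvd_sub_sum_esymm_le (P : Finset ℕ) (m : ℕ) {z : ℂ} (hz : ‖1 + z‖ ≤ 1)
    (k : ℕ) :
    ‖(1 + z) ^ #{p ∈ P | p ∣ m} -
      ∑ j ∈ range (k + 1), (P.val.map (dvdIndicator m)).esymm j • z ^ j‖ ≤
      ‖z‖ ^ (k + 1) * (P.val.map (dvdIndicator m)).esymm (k + 1) := by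
  rw [← prod_one_add_dvdIndicator_smul]
  exact norm_prod_one_add_smul_sub_sum_esymm_le P (dvdIndicator_nonneg m)
    (dvdIndicator_le_one m) hz k

lemma norm_expect_pow_card_dvd_sub_sum_esymm_le (hP : ∀ p ∈ P, p.Prime) (n : ℕ) {z : ℂ}
    (hz : ‖1 + z‖ ≤ 1) (k : ℕ) :
    ‖𝔼 m ∈ Icc 1 n, (1 + z) ^ #{p ∈ P | p ∣ m} -
      ∑ j ∈ range (k + 1), (𝔼 m ∈ Icc 1 n, (P.val.map (dvdIndicator m)).esymm j) • z ^ j‖ ≤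
      ‖z‖ ^ (k + 1) * (P.val.map fun p : ℕ ↦ (p : ℝ)⁻¹).esymm (k + 1) := by
  have hswap : ∑ j ∈ range (k + 1),
        (𝔼 m ∈ Icc 1 n, (P.val.map (dvdIndicator m)).esymm j) • z ^ j =
      𝔼 m ∈ Icc 1 n, ∑ j ∈ range (k + 1), (P.val.map (dvdIndicator m)).esymm j • z ^ j := by
    simp only [expect_sum_comm, Complex.real_smul, Complex.ofReal_expect, expect_mul]
  rw [hswap, ← expect_sub_distrib]
  calc _ ≤ 𝔼 m ∈ Icc 1 n, ‖(1 + z) ^ #{p ∈ P | p ∣ m} -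
        ∑ j ∈ range (k + 1), (P.val.map (dvdIndicator m)).esymm j • z ^ j‖ :=
        RCLike.norm_expect_le (K := ℂ)
    _ ≤ 𝔼 m ∈ Icc 1 n, ‖z‖ ^ (k + 1) * (P.val.map (dvdIndicator m)).esymm (k + 1) :=
        expect_le_expect fun m _ ↦ norm_pow_card_dvd_sub_sum_esymm_le P m hz k
    _ ≤ _ := by
        rw [← mul_expect]
        gcongr
        exact expect_esymm_dvdIndicator_le hP n (k + 1)

lemma norm_sum_expect_esymm_sub_sum_esymm_inv_le (hP : ∀ p ∈ P, p.Prime) {N : ℕ} (hPN : #P ≤ N)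
    (hN : 1 ≤ N) {n : ℕ} (hn : n ≠ 0) (z : ℂ) (k : ℕ) :
    ‖∑ j ∈ range (k + 1), (𝔼 m ∈ Icc 1 n, (P.val.map (dvdIndicator m)).esymm j) • z ^ j -
      ∑ j ∈ range (k + 1), (P.val.map fun p : ℕ ↦ (p : ℝ)⁻¹).esymm j • z ^ j‖ ≤
      Real.exp ‖z‖ * N ^ k / n := by
  rw [← sum_sub_distrib]
  calc _ ≤ ∑ j ∈ range (k + 1), ‖z‖ ^ j * (#P).choose j / n := by
        refine norm_sum_le_of_le _ fun j _ ↦ ?_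
        rw [← sub_smul, norm_smul, norm_pow, mul_comm, Real.norm_eq_abs, mul_div_assoc]
        gcongr
        exact abs_expect_esymm_dvdIndicator_sub_le hP hn j
    _ ≤ _ := by
        rw [← sum_div]
        gcongr
        exact sum_pow_mul_choose_le (norm_nonneg z) hPN hN k

theorem norm_expect_pow_card_dvd_sub_prod_le (hP : ∀ p ∈ P, p.Prime) {N : ℕ} (hPN : #P ≤ N)
    (hN : 1 ≤ N) {n : ℕ} (hn : n ≠ 0) {z : ℂ} (hz : ‖1 + z‖ ≤ 1) (k : ℕ) :
    ‖𝔼 m ∈ Icc 1 n, (1 + z) ^ #{p ∈ P | p ∣ m} - ∏ p ∈ P, (1 + (p : ℝ)⁻¹ • z)‖ ≤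
      2 * Real.exp (Real.exp 1 * ‖z‖ * ∑ p ∈ P, (p : ℝ)⁻¹ - (k + 1)) +
        Real.exp ‖z‖ * N ^ k / n := by
  have htail := pow_mul_esymm_inv_le_exp P (norm_nonneg z) (k + 1)
  have hmean := (norm_expect_pow_card_dvd_sub_sum_esymm_le hP n hz k).trans htail
  have hmoments := norm_sum_expect_esymm_sub_sum_esymm_inv_le hP hPN hN hn z k
  have hmodel := (norm_sub_rev _ _).trans_le
    ((norm_prod_one_add_smul_sub_sum_esymm_le P
    (fun p ↦ inv_nonneg.2 p.cast_nonneg) Nat.cast_inv_le_one hz k).trans htail)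
  push_cast at hmean hmodel
  linarith [norm_sub_le_norm_sub_add_norm_sub
    (𝔼 m ∈ Icc 1 n, (1 + z) ^ #{p ∈ P | p ∣ m})
    (∑ j ∈ range (k + 1), (P.val.map fun p : ℕ ↦ (p : ℝ)⁻¹).esymm j • z ^ j)
    (∏ p ∈ P, (1 + (p : ℝ)⁻¹ • z)),
    norm_sub_le_norm_sub_add_norm_sub
    (𝔼 m ∈ Icc 1 n, (1 + z) ^ #{p ∈ P | p ∣ m})
    (∑ j ∈ range (k + 1), (𝔼 m ∈ Icc 1 n, (P.val.map (dvdIndicator m)).esymm j) • z ^ j)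
    (∑ j ∈ range (k + 1), (P.val.map fun p : ℕ ↦ (p : ℝ)⁻¹).esymm j • z ^ j)]

end Sieve

section Mertens

lemma log_factorial_eq_sum_primesLE (n : ℕ) : Real.log (n.factorial : ℝ) =
    ∑ p ∈ Nat.primesLE n, (n.factorial.factorization p : ℝ) * Real.log p := by
  have hsupp : n.factorial.factorization.support ⊆ Nat.primesLE n := fun p hp ↦ by
    rw [Nat.support_factorization, Nat.mem_primeFactors] at hp
    exact Nat.mem_primesLE.2 ⟨hp.1.dvd_factorial.1 hp.2.1, hp.1⟩
  conv_lhs => rw [← Nat.prod_factorization_pow_eq_self n.factorial_ne_zero]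
  rw [Finsupp.prod_of_support_subset _ hsupp _ (by simp), Nat.cast_prod,
    Real.log_prod fun p hp ↦ by have := (Nat.prime_of_mem_primesLE hp).pos; positivity]
  simp

lemma div_sub_one_le_factorization_factorial {p : ℕ} (hp : p.Prime) (n : ℕ) :
    (n : ℝ) / p - 1 ≤ n.factorial.factorization p := by
  have hle : n / p ≤ n.factorial.factorization p := by
    have hdvd := (Nat.factorization_le_iff_dvd (Nat.factorial_ne_zero _) n.factorial_ne_zero).2
      (Nat.factorial_dvd_factorial (Nat.mul_div_le n p)) p
    rw [Nat.factorization_factorial_mul hp] at hdvd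
    exact le_of_add_le_right hdvd
  linarith [(Nat.cast_le (α := ℝ)).2 hle, natCast_div_lt_natCast_div_add_one n p]

lemma factorization_factorial_le_div_sub_one {p : ℕ} (hp : p.Prime) (n : ℕ) :
    (n.factorial.factorization p : ℝ) ≤ n / (p - 1) :=
  calc (n.factorial.factorization p : ℝ) ≤ (n / (p - 1) : ℕ) :=
        mod_cast Nat.factorization_factorial_le_div_pred hp n
    _ ≤ n / (p - 1) := by simpa [hp.one_le] using Nat.cast_div_le (α := ℝ) (m := n) (n := p - 1)

lemma log_div_mul_sub_one_nonneg (n : ℕ) : 0 ≤ Real.log n / (n * (n - 1)) := by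
  obtain rfl | hn := n.eq_zero_or_pos
  · simp
  have hn₁ : (1 : ℝ) ≤ n := mod_cast hn
  exact div_nonneg (Real.log_nonneg hn₁) (mul_nonneg n.cast_nonneg (sub_nonneg.2 hn₁))

lemma summable_log_div_mul_sub_one :
    Summable fun n : ℕ ↦ Real.log n / (n * (n - 1)) := by
  refine .of_nonneg_of_le log_div_mul_sub_one_nonneg (fun n ↦ ?_)
    ((Real.summable_nat_rpow (p := -(3 / 2)).2 (by norm_num)).mul_left 4)
  obtain hn | hn := lt_or_ge n 2
  · interval_cases n <;> simp
  have hn₂ : (2 : ℝ) ≤ n := mod_cast hn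
  calc Real.log n / (n * (n - 1)) ≤ ((n : ℝ) ^ (1 / 2 : ℝ) / (1 / 2)) / (n * (n / 2)) := by
        gcongr
        · exact Real.log_le_rpow_div n.cast_nonneg (by norm_num)
        · linarith
    _ = 4 * ((n : ℝ) ^ (1 / 2 : ℝ) / (n : ℝ) ^ (2 : ℝ)) := by
        rw [Real.rpow_two]; field_simp; norm_num
    _ = 4 * (n : ℝ) ^ (-(3 / 2) : ℝ) := by rw [← Real.rpow_sub (by linarith)]; norm_num

lemma sum_log_div_le_log_add {n : ℕ} (hn : 0 < n) :
    ∑ p ∈ Nat.primesLE n, Real.log p / p ≤ Real.log n + Real.log 4 := by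
  have hn₀ : (0 : ℝ) < n := mod_cast hn
  have htheta : ∑ p ∈ Nat.primesLE n, Real.log p ≤ Real.log 4 * n := by
    rw [← Chebyshev.theta_eq_sum_primesLE_log]
    exact Chebyshev.theta_le_log4_mul_x n.cast_nonneg
  have hfactorial : Real.log (n.factorial : ℝ) ≤ n * Real.log n := by
    rw [← Real.log_pow]
    exact Real.log_le_log (by positivity) (mod_cast n.factorial_le_pow)
  refine le_of_mul_le_mul_left ?_ hn₀
  calc n * ∑ p ∈ Nat.primesLE n, Real.log p / p
      = ∑ p ∈ Nat.primesLE n, ((n : ℝ) / p - 1) * Real.log p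
          + ∑ p ∈ Nat.primesLE n, Real.log p := by
        rw [mul_sum, ← sum_add_distrib]; exact sum_congr rfl fun p _ ↦ by ring
    _ ≤ Real.log (n.factorial : ℝ) + Real.log 4 * n := by
        rw [log_factorial_eq_sum_primesLE]
        gcongr with p hp
        exact div_sub_one_le_factorization_factorial (Nat.prime_of_mem_primesLE hp) n
    _ ≤ n * (Real.log n + Real.log 4) := by linarith

lemma log_le_sum_log_div_add {n : ℕ} (hn : 0 < n) :
    Real.log n ≤ ∑ p ∈ Nat.primesLE n, Real.log p / p +
      ∑' m : ℕ, Real.log m / (m * (m - 1)) + 1 := by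
  have hn₀ : (0 : ℝ) < n := mod_cast hn
  have hstirling : n * Real.log n ≤ Real.log (n.factorial : ℝ) + n := by
    have hlog := Real.log_le_log (by positivity) (Real.pow_div_factorial_le_exp n hn₀.le n)
    rw [Real.log_exp, Real.log_div (by positivity) (by positivity), Real.log_pow] at hlog
    linarith
  refine le_of_mul_le_mul_left ?_ hn₀
  calc n * Real.log n ≤ Real.log (n.factorial : ℝ) + n := hstirling
    _ ≤ ∑ p ∈ Nat.primesLE n, (n : ℝ) / (p - 1) * Real.log p + n := by
        rw [log_factorial_eq_sum_primesLE]
        gcongr with p hp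
        exact factorization_factorial_le_div_sub_one (Nat.prime_of_mem_primesLE hp) n
    _ = n * (∑ p ∈ Nat.primesLE n, Real.log p / p +
          ∑ p ∈ Nat.primesLE n, Real.log p / (p * (p - 1)) + 1) := by
        rw [mul_add, mul_one, ← sum_add_distrib, mul_sum]
        congr 1
        refine sum_congr rfl fun p hp ↦ ?_
        have hp₁ : (1 : ℝ) < p := mod_cast Nat.one_lt_of_mem_primesLE hp
        have hp₂ : (p : ℝ) - 1 ≠ 0 := sub_ne_zero.2 hp₁.ne'
        field_simp
        ring
    _ ≤ _ := by
        gcongr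
        exact summable_log_div_mul_sub_one.sum_le_tsum _ fun m _ ↦ log_div_mul_sub_one_nonneg m

theorem isBigO_sum_log_div_sub_log :
    (fun n : ℕ ↦ ∑ p ∈ Nat.primesLE n, Real.log p / p - Real.log n) =O[atTop]
      fun _ ↦ (1 : ℝ) := by
  refine .of_bound (∑' m : ℕ, Real.log m / (m * (m - 1)) + 1 + Real.log 4) ?_
  filter_upwards [eventually_gt_atTop 0] with n hn
  rw [norm_one, mul_one, Real.norm_eq_abs, abs_le]
  have := sum_log_div_le_log_add hn
  have := log_le_sum_log_div_add hn
  have : 0 ≤ ∑' m : ℕ, Real.log m / (m * (m - 1)) := tsum_nonneg log_div_mul_sub_one_nonneg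
  have : 0 ≤ Real.log 4 := Real.log_nonneg (by norm_num)
  constructor <;> linarith

lemma dist_le_sub_of_dist_succ_le {X : Type*} [PseudoMetricSpace X] {f : ℕ → X} {g : ℕ → ℝ} {m : ℕ}
    (h : ∀ k, m ≤ k → dist (f k) (f (k + 1)) ≤ g k - g (k + 1)) {n : ℕ} (hmn : m ≤ n) :
    dist (f m) (f n) ≤ g m - g n := by
  induction n, hmn using Nat.le_induction with
  | base => simp
  | succ n hmn ih => linarith [dist_triangle (f m) (f n) (f (n + 1)), h n hmn]

lemma abs_sub_div_sub_log_sub_log_le {u v : ℝ} (hv : 0 < v) (hvu : v ≤ u) (huv : u ≤ v + 1) :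
    |(u - v) / u - (Real.log u - Real.log v)| ≤ 1 / v - 1 / u := by
  have hu : 0 < u := hv.trans_le hvu
  have hupper := Real.log_le_sub_one_of_pos (div_pos hu hv)
  have hlower := Real.log_le_sub_one_of_pos (div_pos hv hu)
  rw [Real.log_div hu.ne' hv.ne', div_sub_one hv.ne'] at hupper
  rw [Real.log_div hv.ne' hu.ne', div_sub_one hu.ne', ← neg_sub u v, neg_div] at hlower
  have hgap : (u - v) / v - (u - v) / u ≤ 1 / v - 1 / u := by
    calc (u - v) / v - (u - v) / u = (u - v) * (1 / v - 1 / u) := by ring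
      _ ≤ 1 / v - 1 / u := mul_le_of_le_one_left
        (sub_nonneg.2 (one_div_le_one_div_of_le hv hvu)) (by linarith)
  rw [abs_le]
  constructor <;> linarith

-- Summation by parts: `B` below is the sum minus `log (u n)` and minus its boundary term, and the
-- increments of `B` are dominated by those of the convergent sequence `-1 / u`.
theorem isBigO_sum_div_sub_log {a u : ℕ → ℝ} (hu : Monotone u) (hu₁ : ∀ n, u (n + 1) ≤ u n + 1)
    (hpos : ∀ᶠ n in atTop, 0 < u n)
    (ha : (fun n ↦ ∑ i ∈ range (n + 1), a i - u n) =O[atTop] fun _ ↦ (1 : ℝ)) :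
    (fun n ↦ ∑ i ∈ range (n + 1), a i / u i - Real.log (u n)) =O[atTop] fun _ ↦ (1 : ℝ) := by
  obtain ⟨C, hC⟩ := ha.bound
  obtain ⟨m, hm⟩ := eventually_atTop.1 (hpos.and hC)
  let r (n : ℕ) : ℝ := ∑ i ∈ range (n + 1), a i - u n
  let B (n : ℕ) : ℝ := ∑ i ∈ range (n + 1), a i / u i - Real.log (u n) - r n / u n
  have hr {n : ℕ} (hn : m ≤ n) : |r n| ≤ C := by simpa using (hm n hn).2
  have hinv {n : ℕ} (hn : m ≤ n) : 0 ≤ 1 / u n - 1 / u (n + 1) :=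
    sub_nonneg.2 (one_div_le_one_div_of_le (hm n hn).1 (hu n.le_succ))
  have hincr {n : ℕ} (hn : m ≤ n) : B (n + 1) - B n = r n * (1 / u n - 1 / u (n + 1)) +
      ((u (n + 1) - u n) / u (n + 1) - (Real.log (u (n + 1)) - Real.log (u n))) := by
    have hn₀ := (hm n hn).1.ne'
    have hn₁ := (hm (n + 1) (hn.trans n.le_succ)).1.ne'
    simp only [B, r, sum_range_succ _ (n + 1)]
    field_simp
    ring
  have hC₀ : 0 ≤ C := (abs_nonneg _).trans (hr le_rfl)
  have hstep (n : ℕ) (hn : m ≤ n) : dist (B n) (B (n + 1)) ≤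
      (C + 1) * (1 / u n) - (C + 1) * (1 / u (n + 1)) := by
    rw [dist_comm, Real.dist_eq, hincr hn, ← mul_sub, add_mul, one_mul]
    refine (abs_add_le _ _).trans (add_le_add ?_
      (abs_sub_div_sub_log_sub_log_le (hm n hn).1 (hu n.le_succ) (hu₁ n)))
    rw [abs_mul, abs_of_nonneg (hinv hn)]
    exact mul_le_mul_of_nonneg_right (hr hn) (hinv hn)
  have hB {n : ℕ} (hn : m ≤ n) : |B n - B m| ≤ (C + 1) * (1 / u m) := by
    have := (hm n hn).1
    rw [← Real.dist_eq, dist_comm]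
    exact (dist_le_sub_of_dist_succ_le hstep hn).trans (sub_le_self _ (by positivity))
  refine .of_bound ((C + 1) * (1 / u m) + |B m| + C / u m) ?_
  filter_upwards [eventually_ge_atTop m] with n hn
  have hbdry : |r n / u n| ≤ C / u m := by
    rw [abs_div, abs_of_pos (hm n hn).1]
    exact div_le_div₀ hC₀ (hr hn) (hm m le_rfl).1 (hu hn)
  calc ‖∑ i ∈ range (n + 1), a i / u i - Real.log (u n)‖
      = |(B n - B m) + B m + r n / u n| := by simp only [B, sub_add_cancel, Real.norm_eq_abs]
    _ ≤ ((C + 1) * (1 / u m) + |B m| + C / u m) * ‖(1 : ℝ)‖ := by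
      rw [norm_one, mul_one]
      exact (abs_add_three _ _ _).trans (by gcongr; exact hB hn)

/-- The sum of the reciprocals of the primes up to `n`, an approximation to the mean of `ω` over
`{1, …, n}`. -/
noncomputable def primeReciprocalSum (n : ℕ) : ℝ := ∑ p ∈ Nat.primesLE n, (p : ℝ)⁻¹

lemma monotone_log_natCast : Monotone fun n : ℕ ↦ Real.log n := fun m n hmn ↦ by
  simpa only [Real.log_of_nat_eq_posLog] using
    Real.monotoneOn_posLog (Set.mem_Ici.2 m.cast_nonneg) (Set.mem_Ici.2 n.cast_nonneg)
      (Nat.cast_le.2 hmn)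

lemma log_natCast_succ_le (n : ℕ) : Real.log (n + 1 : ℕ) ≤ Real.log n + 1 := by
  obtain rfl | hn := n.eq_zero_or_pos
  · simp
  have hn₁ : (1 : ℝ) ≤ n := mod_cast hn
  rw [← Real.log_exp 1, ← Real.log_mul (by positivity) (Real.exp_pos 1).ne']
  refine Real.log_le_log (by positivity) ?_
  push_cast
  nlinarith [Real.add_one_le_exp 1]

theorem isBigO_primeReciprocalSum_sub_log_log :
    (fun n : ℕ ↦ primeReciprocalSum n - Real.log (Real.log n)) =O[atTop] fun _ ↦ (1 : ℝ) := by
  let a (i : ℕ) : ℝ := if i.Prime then Real.log i / i else 0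
  have hsum (n : ℕ) : ∑ i ∈ range (n + 1), a i = ∑ p ∈ Nat.primesLE n, Real.log p / p := by
    rw [Nat.primesLE_eq_filter_range, sum_filter]
  have hdiv (n : ℕ) : ∑ i ∈ range (n + 1), a i / Real.log i = primeReciprocalSum n := by
    rw [primeReciprocalSum, Nat.primesLE_eq_filter_range, sum_filter]
    refine sum_congr rfl fun i _ ↦ ?_
    simp only [a, ite_div, zero_div]
    split_ifs with hi
    · have := (Real.log_pos (by exact_mod_cast hi.one_lt : (1 : ℝ) < i)).ne'
      field_simp
    · rfl
  simpa only [hdiv] using isBigO_sum_div_sub_log (a := a) (u := fun n ↦ Real.log n)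
    monotone_log_natCast log_natCast_succ_le
    ((Real.tendsto_log_atTop.comp tendsto_natCast_atTop_atTop).eventually_gt_atTop 0)
    (by simpa only [hsum] using isBigO_sum_log_div_sub_log)

end Mertens

section SieveLevel

lemma tendsto_log_sub_log_of_isEquivalent {α : Type*} {l : Filter α} {f g : α → ℝ}
    (hfg : f ~[l] g) (hg : Tendsto g l atTop) :
    Tendsto (fun x ↦ Real.log (f x) - Real.log (g x)) l (𝓝 0) := by
  have hf : Tendsto f l atTop := hfg.symm.tendsto_atTop hg
  have hdiv := ((isEquivalent_iff_tendsto_one (hg.eventually_ne_atTop 0)).1 hfg).log one_ne_zero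
  rw [Real.log_one] at hdiv
  refine hdiv.congr' ?_
  filter_upwards [hf.eventually_ne_atTop 0, hg.eventually_ne_atTop 0] with x hfx hgx
  exact Real.log_div hfx hgx

lemma isEquivalent_log {α : Type*} {l : Filter α} {f g : α → ℝ} (hfg : f ~[l] g)
    (hg : Tendsto g l atTop) : (fun x ↦ Real.log (f x)) ~[l] fun x ↦ Real.log (g x) :=
  ((isLittleO_one_iff ℝ).2 (tendsto_log_sub_log_of_isEquivalent hfg hg)).trans_isBigO
    ((isLittleO_const_left.2 (.inr (tendsto_norm_atTop_atTop.comp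
      (Real.tendsto_log_atTop.comp hg)))).isBigO)

lemma tendsto_log_log_floor_sub_log_log :
    Tendsto (fun x : ℝ ↦ Real.log (Real.log ⌊x⌋₊) - Real.log (Real.log x)) atTop (𝓝 0) :=
  tendsto_log_sub_log_of_isEquivalent (isEquivalent_log isEquivalent_nat_floor tendsto_id)
    Real.tendsto_log_atTop

lemma tendsto_log_natCast : Tendsto (fun n : ℕ ↦ Real.log n) atTop atTop :=
  Real.tendsto_log_atTop.comp tendsto_natCast_atTop_atTop

lemma tendsto_log_log_natCast : Tendsto (fun n : ℕ ↦ Real.log (Real.log n)) atTop atTop :=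
  Real.tendsto_log_atTop.comp tendsto_log_natCast

lemma tendsto_log_div_log_log_sq :
    Tendsto (fun n : ℕ ↦ Real.log n / Real.log (Real.log n) ^ 2) atTop atTop := by
  refine ((Real.tendsto_exp_div_pow_atTop 2).comp tendsto_log_log_natCast).congr' ?_
  filter_upwards [tendsto_log_natCast.eventually_gt_atTop 0] with n hn
  simp only [Function.comp_apply, Real.exp_log hn]

/-- The truncation point `n ^ (1 / (log log n) ^ 2)` for the primes in the sieve: it is small enough
that products of `log log n` primes below it are negligible compared with `n`, and large enough that
the remaining primes up to `n` contribute `o(√(log log n))` prime divisors on average. -/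
noncomputable def sieveLevel (n : ℕ) : ℕ := ⌊Real.exp (Real.log n / Real.log (Real.log n) ^ 2)⌋₊

lemma tendsto_exp_log_div_log_log_sq :
    Tendsto (fun n : ℕ ↦ Real.exp (Real.log n / Real.log (Real.log n) ^ 2)) atTop atTop :=
  Real.tendsto_exp_atTop.comp tendsto_log_div_log_log_sq

lemma tendsto_sieveLevel : Tendsto sieveLevel atTop atTop :=
  tendsto_nat_floor_atTop.comp tendsto_exp_log_div_log_log_sq

lemma eventually_sieveLevel_le : ∀ᶠ n in atTop, sieveLevel n ≤ n := by
  filter_upwards [tendsto_log_log_natCast.eventually_ge_atTop 1,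
    eventually_gt_atTop 0] with n hL hn
  have hn₀ : (0 : ℝ) < n := mod_cast hn
  refine Nat.floor_le_of_le ?_
  rw [← Real.le_log_iff_exp_le hn₀]
  exact div_le_self (Real.log_natCast_nonneg n) (one_le_pow₀ hL)

lemma log_log_exp_log_div {x : ℝ} (hx : 0 < Real.log x) (hx' : Real.log (Real.log x) ≠ 0) :
    Real.log (Real.log (Real.exp (Real.log x / Real.log (Real.log x) ^ 2))) =
      Real.log (Real.log x) - 2 * Real.log (Real.log (Real.log x)) := by
  rw [Real.log_exp, Real.log_div hx.ne' (pow_ne_zero 2 hx'), Real.log_pow, Nat.cast_two]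

lemma isLittleO_log_sqrt : Real.log =o[atTop] fun x ↦ √x := by
  simpa only [Real.sqrt_eq_rpow] using isLittleO_log_rpow_atTop one_half_pos

lemma tendsto_sqrt_log_log_natCast : Tendsto (fun n : ℕ ↦ √(Real.log (Real.log n))) atTop atTop :=
  Real.tendsto_sqrt_atTop.comp tendsto_log_log_natCast

lemma isLittleO_one_sqrt_log_log :
    (fun _ ↦ (1 : ℝ)) =o[atTop] fun n : ℕ ↦ √(Real.log (Real.log n)) :=
  isLittleO_const_left.2 (.inr (tendsto_norm_atTop_atTop.comp tendsto_sqrt_log_log_natCast))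

lemma isLittleO_log_log_sieveLevel_sub :
    (fun n ↦ Real.log (Real.log (sieveLevel n)) - Real.log (Real.log n)) =o[atTop]
      fun n : ℕ ↦ √(Real.log (Real.log n)) := by
  have hfloor := (((isLittleO_one_iff ℝ).2 (tendsto_log_log_floor_sub_log_log.comp
    tendsto_exp_log_div_log_log_sq)).trans isLittleO_one_sqrt_log_log)
  have hlog := (isLittleO_log_sqrt.comp_tendsto tendsto_log_log_natCast).const_mul_left 2
  refine (hfloor.sub hlog).congr' ?_ .rfl
  filter_upwards [tendsto_log_natCast.eventually_gt_atTop 0,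
    tendsto_log_log_natCast.eventually_ne_atTop 0] with n hn hL
  simp only [Function.comp_apply, log_log_exp_log_div hn hL, sieveLevel]
  ring

lemma isLittleO_primeReciprocalSum_sieveLevel_sub :
    (fun n ↦ primeReciprocalSum (sieveLevel n) - Real.log (Real.log n)) =o[atTop]
      fun n : ℕ ↦ √(Real.log (Real.log n)) := by
  have hmertens := (isBigO_primeReciprocalSum_sub_log_log.comp_tendsto
    tendsto_sieveLevel).trans_isLittleO isLittleO_one_sqrt_log_log
  simpa using hmertens.add isLittleO_log_log_sieveLevel_sub

lemma isLittleO_primeReciprocalSum_sub_sieveLevel :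
    (fun n ↦ primeReciprocalSum n - primeReciprocalSum (sieveLevel n)) =o[atTop]
      fun n : ℕ ↦ √(Real.log (Real.log n)) := by
  have hmertens := isBigO_primeReciprocalSum_sub_log_log.trans_isLittleO isLittleO_one_sqrt_log_log
  simpa using hmertens.sub isLittleO_primeReciprocalSum_sieveLevel_sub

lemma tendsto_sieveLevel_pow_div :
    Tendsto (fun n ↦ (sieveLevel n : ℝ) ^ ⌊Real.log (Real.log n)⌋₊ / n) atTop (𝓝 0) := by
  have hlim : Tendsto (fun n : ℕ ↦ Real.exp (-(Real.log n / 2))) atTop (𝓝 0) :=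
    Real.tendsto_exp_neg_atTop_nhds_zero.comp (tendsto_log_natCast.atTop_div_const two_pos)
  refine squeeze_zero' (.of_forall fun n ↦ by positivity) ?_ hlim
  filter_upwards [tendsto_log_natCast.eventually_gt_atTop 0,
    tendsto_log_log_natCast.eventually_ge_atTop 2, eventually_gt_atTop 0] with n hlog hL hn
  have hn₀ : (0 : ℝ) < n := mod_cast hn
  set L := Real.log (Real.log n)
  have hL₀ : 0 < L := two_pos.trans_le hL
  calc (sieveLevel n : ℝ) ^ ⌊L⌋₊ / n ≤ Real.exp (Real.log n / L ^ 2) ^ ⌊L⌋₊ / n := by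
        gcongr; exact Nat.floor_le (Real.exp_pos _).le
    _ = Real.exp (⌊L⌋₊ * (Real.log n / L ^ 2) - Real.log n) := by
        rw [← Real.exp_nat_mul, Real.exp_sub, Real.exp_log hn₀]
    _ ≤ Real.exp (L * (Real.log n / L ^ 2) - Real.log n) := by
        gcongr; exact Nat.floor_le hL₀.le
    _ = Real.exp (Real.log n / L - Real.log n) := by congr 2; field_simp
    _ ≤ Real.exp (-(Real.log n / 2)) := by
        gcongr
        linarith [div_le_div_of_nonneg_left hlog.le two_pos hL]

end SieveLevel

section PrimeFactors

lemma card_primeFactors_eq_add {N n m : ℕ} (hN : N ≤ n) (hm : m ∈ Icc 1 n) :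
    #m.primeFactors =
      #{p ∈ Nat.primesLE N | p ∣ m} + #{p ∈ Nat.primesLE n \ Nat.primesLE N | p ∣ m} := by
  have hm' := mem_Icc.1 hm
  rw [← card_union_of_disjoint (disjoint_filter_filter disjoint_sdiff), ← filter_union,
    union_sdiff_of_subset (Nat.primesLE_mono hN)]
  congr 1
  ext p
  simp only [Nat.mem_primeFactors, mem_filter, Nat.mem_primesLE]
  exact ⟨fun ⟨hp, hpm, _⟩ ↦ ⟨⟨(Nat.le_of_dvd (by lia) hpm).trans hm'.2, hp⟩, hpm⟩,
    fun ⟨⟨_, hp⟩, hpm⟩ ↦ ⟨hp, hpm, by lia⟩⟩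

lemma expect_card_dvd_le (P : Finset ℕ) (n : ℕ) :
    𝔼 m ∈ Icc 1 n, (#{p ∈ P | p ∣ m} : ℝ) ≤ ∑ p ∈ P, (p : ℝ)⁻¹ := by
  have hcard (m : ℕ) : (#{p ∈ P | p ∣ m} : ℝ) = ∑ p ∈ P, dvdIndicator m p := by
    simp [dvdIndicator]
  simp only [hcard, expect_sum_comm]
  exact sum_le_sum fun p _ ↦ expect_dvdIndicator_le n p

lemma norm_expect_pow_card_primeFactors_sub_le {N n : ℕ} (hN : N ≤ n) {z : ℂ} (hz : ‖1 + z‖ ≤ 1) :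
    ‖𝔼 m ∈ Icc 1 n, (1 + z) ^ #m.primeFactors -
      𝔼 m ∈ Icc 1 n, (1 + z) ^ #{p ∈ Nat.primesLE N | p ∣ m}‖ ≤
      ‖z‖ * (primeReciprocalSum n - primeReciprocalSum N) := by
  set Q := Nat.primesLE n \ Nat.primesLE N with hQ
  have hS : primeReciprocalSum n - primeReciprocalSum N = ∑ p ∈ Q, (p : ℝ)⁻¹ := by
    rw [sub_eq_iff_eq_add]; exact (sum_sdiff (Nat.primesLE_mono hN)).symm
  rw [← expect_sub_distrib, hS]
  calc _ ≤ 𝔼 m ∈ Icc 1 n,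
        ‖(1 + z) ^ #m.primeFactors - (1 + z) ^ #{p ∈ Nat.primesLE N | p ∣ m}‖ :=
        RCLike.norm_expect_le (K := ℂ)
    _ ≤ 𝔼 m ∈ Icc 1 n, ‖z‖ * (#{p ∈ Q | p ∣ m} : ℝ) := expect_le_expect fun m hm ↦ by
        rw [card_primeFactors_eq_add hN hm, ← hQ, pow_add, ← mul_sub_one, norm_mul, norm_pow,
          mul_comm ‖z‖]
        refine (mul_le_of_le_one_left (norm_nonneg _) (pow_le_one₀ (norm_nonneg _) hz)).trans ?_
        simpa using norm_pow_sub_one_le hz #{p ∈ Q | p ∣ m}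
    _ ≤ _ := by
        rw [← mul_expect]
        gcongr
        exact expect_card_dvd_le Q n

lemma norm_prod_primesLE_sub_exp_le (N : ℕ) {z : ℂ} (hz : ‖1 + z‖ ≤ 1) :
    ‖∏ p ∈ Nat.primesLE N, (1 + (p : ℝ)⁻¹ • z) - Complex.exp (primeReciprocalSum N * z)‖ ≤
      Real.pi ^ 2 / 6 * ‖z‖ ^ 2 := by
  refine (norm_prod_one_add_smul_sub_exp_le _ hz (fun p _ ↦ inv_nonneg.2 p.cast_nonneg)
    fun p hp ↦ ?_).trans ?_
  · rw [one_div]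
    exact inv_anti₀ two_pos (mod_cast (Nat.prime_of_mem_primesLE hp).two_le)
  · gcongr
    simpa using sum_le_hasSum _ (fun _ _ ↦ by positivity) hasSum_zeta_two

theorem norm_expect_pow_card_primeFactors_sub_exp_le {N n : ℕ} (hN : 1 ≤ N) (hNn : N ≤ n) {z : ℂ}
    (hz : ‖1 + z‖ ≤ 1) (k : ℕ) :
    ‖𝔼 m ∈ Icc 1 n, (1 + z) ^ #m.primeFactors - Complex.exp (primeReciprocalSum N * z)‖ ≤
      ‖z‖ * (primeReciprocalSum n - primeReciprocalSum N) +
        2 * Real.exp (Real.exp 1 * ‖z‖ * primeReciprocalSum N - (k + 1)) +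
        Real.exp ‖z‖ * N ^ k / n + Real.pi ^ 2 / 6 * ‖z‖ ^ 2 := by
  have hcard : #(Nat.primesLE N) ≤ N := by
    simpa using card_le_card (t := Icc 1 N) fun p hp ↦ mem_Icc.2
      ⟨(Nat.prime_of_mem_primesLE hp).one_le, (Nat.mem_primesLE.1 hp).1⟩
  have htrunc := norm_expect_pow_card_primeFactors_sub_le hNn hz
  have hsieve : _ ≤ 2 * Real.exp (Real.exp 1 * ‖z‖ * primeReciprocalSum N - (k + 1)) + _ :=
    norm_expect_pow_card_dvd_sub_prod_le (fun p ↦ Nat.prime_of_mem_primesLE) hcard hN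
      (n := n) (by lia) hz k
  have hprod := norm_prod_primesLE_sub_exp_le N hz
  have htri := norm_add₃_le (a :=
    𝔼 m ∈ Icc 1 n, (1 + z) ^ #m.primeFactors -
      𝔼 m ∈ Icc 1 n, (1 + z) ^ #{p ∈ Nat.primesLE N | p ∣ m})
    (b := 𝔼 m ∈ Icc 1 n, (1 + z) ^ #{p ∈ Nat.primesLE N | p ∣ m} -
      ∏ p ∈ Nat.primesLE N, (1 + (p : ℝ)⁻¹ • z))
    (c := ∏ p ∈ Nat.primesLE N, (1 + (p : ℝ)⁻¹ • z) - Complex.exp (primeReciprocalSum N * z))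
  rw [sub_add_sub_cancel, sub_add_sub_cancel] at htri
  linarith

end PrimeFactors

section CentralLimit

lemma isLittleO_sqrt_log_log : (fun n : ℕ ↦ √(Real.log (Real.log n))) =o[atTop]
    fun n : ℕ ↦ Real.log (Real.log n) := by
  refine (isLittleO_one_sqrt_log_log.mul_isBigO
    (isBigO_refl (fun n : ℕ ↦ √(Real.log (Real.log n))) _)).congr' (by simp) ?_
  filter_upwards [tendsto_log_log_natCast.eventually_ge_atTop 0] with n hn
  exact Real.mul_self_sqrt hn

lemma isBigO_primeReciprocalSum_sieveLevel :
    (fun n ↦ primeReciprocalSum (sieveLevel n)) =O[atTop] fun n : ℕ ↦ Real.log (Real.log n) := by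
  simpa using (isLittleO_primeReciprocalSum_sieveLevel_sub.trans isLittleO_sqrt_log_log).isBigO.add
    (isBigO_refl (fun n : ℕ ↦ Real.log (Real.log n)) atTop)

lemma tendsto_mul_zero_of_isBigO_inv {α 𝕜 : Type*} [NormedDivisionRing 𝕜] {l : Filter α}
    {f g : α → 𝕜} {y : α → ℝ} (hf : f =O[l] fun a ↦ (y a)⁻¹) (hg : g =o[l] y) :
    Tendsto (fun a ↦ f a * g a) l (𝓝 0) := by
  rw [← isLittleO_one_iff ℝ]
  refine (hf.mul_isLittleO hg).trans_isBigO (.of_bound 1 (.of_forall fun a ↦ ?_))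
  simpa using inv_mul_le_one (a := |y a|)

variable {z : ℕ → ℂ}

lemma isLittleO_norm_mul_primeReciprocalSum_sieveLevel
    (hz : z =O[atTop] fun n ↦ (√(Real.log (Real.log n)))⁻¹) :
    (fun n ↦ ‖z n‖ * primeReciprocalSum (sieveLevel n)) =o[atTop]
      fun n : ℕ ↦ Real.log (Real.log n) := by
  refine IsBigO.trans_isLittleO ((hz.norm_left.mul isBigO_primeReciprocalSum_sieveLevel).congr' .rfl
    ?_) isLittleO_sqrt_log_log
  exact .of_forall fun n ↦ by simp only [← div_eq_inv_mul, Real.div_sqrt]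

lemma tendsto_exp_norm_mul_primeReciprocalSum_sub_floor
    (hz : z =O[atTop] fun n ↦ (√(Real.log (Real.log n)))⁻¹) :
    Tendsto (fun n : ℕ ↦ Real.exp (Real.exp 1 * ‖z n‖ * primeReciprocalSum (sieveLevel n) -
      (⌊Real.log (Real.log n)⌋₊ + 1))) atTop (𝓝 0) := by
  have hlin := (isLittleO_norm_mul_primeReciprocalSum_sieveLevel hz).const_mul_left (Real.exp 1)
  have hdiff : Tendsto (fun n : ℕ ↦ Real.log (Real.log n) -
      Real.exp 1 * (‖z n‖ * primeReciprocalSum (sieveLevel n))) atTop atTop :=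
    (IsEquivalent.refl.sub_isLittleO hlin).symm.tendsto_atTop tendsto_log_log_natCast
  refine squeeze_zero (fun n ↦ (Real.exp_pos _).le) (fun n ↦ ?_)
    (Real.tendsto_exp_neg_atTop_nhds_zero.comp hdiff)
  exact Real.exp_le_exp.2 (by linarith [Nat.lt_floor_add_one (Real.log (Real.log n))])

theorem tendsto_expect_pow_card_primeFactors_sub_exp (hz₁ : ∀ n, ‖1 + z n‖ ≤ 1)
    (hz : z =O[atTop] fun n ↦ (√(Real.log (Real.log n)))⁻¹) :
    Tendsto (fun n ↦ 𝔼 m ∈ Icc 1 n, (1 + z n) ^ #m.primeFactors -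
      Complex.exp (primeReciprocalSum (sieveLevel n) * z n)) atTop (𝓝 0) := by
  have hinv : Tendsto (fun n : ℕ ↦ (√(Real.log (Real.log n)))⁻¹) atTop (𝓝 0) :=
    tendsto_inv_atTop_zero.comp tendsto_sqrt_log_log_natCast
  have hz₀ : Tendsto (fun n ↦ ‖z n‖) atTop (𝓝 0) := by
    simpa using (hz.trans_tendsto hinv).norm
  have htrunc : Tendsto (fun n ↦ ‖z n‖ * (primeReciprocalSum n -
      primeReciprocalSum (sieveLevel n))) atTop (𝓝 0) :=
    tendsto_mul_zero_of_isBigO_inv hz.norm_left isLittleO_primeReciprocalSum_sub_sieveLevel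
  have hpow : Tendsto (fun n : ℕ ↦ Real.exp ‖z n‖ * sieveLevel n ^ ⌊Real.log (Real.log n)⌋₊ / n)
      atTop (𝓝 0) := by
    simpa [mul_div_assoc] using
      ((Real.continuous_exp.tendsto _).comp hz₀).mul tendsto_sieveLevel_pow_div
  have hbound := ((htrunc.add ((tendsto_exp_norm_mul_primeReciprocalSum_sub_floor hz).const_mul
    2)).add hpow).add ((hz₀.pow 2).const_mul (Real.pi ^ 2 / 6))
  refine squeeze_zero_norm' ?_ (by simpa using hbound)
  filter_upwards [tendsto_sieveLevel.eventually_ge_atTop 1, eventually_sieveLevel_le] with n hN hNn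
  exact norm_expect_pow_card_primeFactors_sub_exp_le hN hNn (hz₁ n) _

lemma tendsto_exp_div_sub_one_sub_div_mul_sq (w : ℂ) :
    Tendsto (fun y : ℝ ↦ (Complex.exp (w / y) - 1 - w / y) * (y : ℂ) ^ 2) atTop
      (𝓝 (w ^ 2 / 2)) := by
  have hdiv : Tendsto (fun y : ℝ ↦ w / y) atTop (𝓝 0) := by
    simpa [div_eq_mul_inv] using (tendsto_inv_atTop_zero (𝕜 := ℝ)).ofReal.const_mul w
  have hrem : Tendsto (fun y : ℝ ↦ (Complex.exp (w / y) -
      ∑ i ∈ range 3, (w / y) ^ i / (i.factorial : ℂ)) * (y : ℂ) ^ 2) atTop (𝓝 0) := by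
    refine (((Complex.exp_sub_sum_range_isBigO_pow 3).comp_tendsto hdiv).mul
      (isBigO_refl (fun y : ℝ ↦ (y : ℂ) ^ 2) atTop)).trans_tendsto ?_
    refine (by simpa using hdiv.const_mul (w ^ 2) : Tendsto (fun y : ℝ ↦ w ^ 2 * (w / y)) atTop
      (𝓝 0)).congr' ?_
    filter_upwards [eventually_ne_atTop 0] with y hy
    have : (y : ℂ) ≠ 0 := mod_cast hy
    simp only [Function.comp_apply]
    field_simp
  refine (by simpa using hrem.add_const (w ^ 2 / 2) : Tendsto _ _ (𝓝 (w ^ 2 / 2))).congr' ?_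
  filter_upwards [eventually_ne_atTop 0] with y hy
  have : (y : ℂ) ≠ 0 := mod_cast hy
  have hsum : ∑ i ∈ range 3, (w / y) ^ i / (i.factorial : ℂ) = 1 + w / y + (w / y) ^ 2 / 2 := by
    simp [sum_range_succ, Nat.factorial]
  rw [hsum]
  field_simp
  ring

lemma isBigO_exp_I_mul_div_sub_one (t : ℝ) {α : Type*} (l : Filter α) (y : α → ℝ) :
    (fun a ↦ Complex.exp (t * Complex.I / y a) - 1) =O[l] fun a ↦ (y a)⁻¹ := by
  refine .of_bound |t| (.of_forall fun a ↦ ?_)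
  simpa [div_eq_mul_inv, mul_assoc, mul_comm, mul_left_comm] using
    Real.norm_exp_I_mul_ofReal_sub_one_le (x := t * (y a)⁻¹)

lemma tendsto_primeReciprocalSum_mul_exp_sub_one_sub (t : ℝ) :
    Tendsto (fun n ↦ primeReciprocalSum (sieveLevel n) *
        (Complex.exp (t * Complex.I / √(Real.log (Real.log n))) - 1) -
      t * √(Real.log (Real.log n)) * Complex.I) atTop (𝓝 (-t ^ 2 / 2)) := by
  have hmean := tendsto_mul_zero_of_isBigO_inv
    (isBigO_exp_I_mul_div_sub_one t atTop fun n : ℕ ↦ √(Real.log (Real.log n)))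
    (f := fun n : ℕ ↦ Complex.exp (t * Complex.I / √(Real.log (Real.log n))) - 1)
    (g := fun n ↦ ((primeReciprocalSum (sieveLevel n) - Real.log (Real.log n) : ℝ) : ℂ))
    (Complex.isLittleO_ofReal_left.2 isLittleO_primeReciprocalSum_sieveLevel_sub)
  have htaylor := (tendsto_exp_div_sub_one_sub_div_mul_sq (t * Complex.I)).comp
    tendsto_sqrt_log_log_natCast
  have hlim : 0 + (t * Complex.I) ^ 2 / 2 = -(t : ℂ) ^ 2 / 2 := by
    rw [mul_pow, Complex.I_sq]; ring
  refine hlim ▸ (hmean.add htaylor).congr' ?_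
  filter_upwards [tendsto_log_log_natCast.eventually_gt_atTop 0] with n hn
  have hsqrt : (√(Real.log (Real.log n)) : ℂ) ≠ 0 := mod_cast (Real.sqrt_pos.2 hn).ne'
  have hsq : ((Real.log (Real.log n) : ℝ) : ℂ) = (√(Real.log (Real.log n)) : ℂ) ^ 2 := by
    rw [← Complex.ofReal_pow, Real.sq_sqrt hn.le]
  simp only [Function.comp_apply, Complex.ofReal_sub]
  rw [hsq]
  field_simp
  ring

lemma expect_exp_normalized_eq {ι : Type*} (s : Finset ι) (f : ι → ℕ) (t : ℝ) {L : ℝ}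
    (hL : 0 < L) :
    𝔼 i ∈ s, Complex.exp (t * ((f i - L) / √L : ℝ) * Complex.I) =
      Complex.exp (-(t * √L * Complex.I)) * 𝔼 i ∈ s, Complex.exp (t * Complex.I / √L) ^ f i := by
  have hsqrt : (√L : ℂ) ≠ 0 := mod_cast (Real.sqrt_pos.2 hL).ne'
  have hsq : (L : ℂ) = (√L : ℂ) ^ 2 := by rw [← Complex.ofReal_pow, Real.sq_sqrt hL.le]
  rw [mul_expect]
  refine expect_congr rfl fun i _ ↦ ?_
  rw [← Complex.exp_nat_mul, ← Complex.exp_add]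
  congr 1
  push_cast
  rw [hsq]
  field_simp
  ring

theorem tendsto_expect_exp_normalized_card_primeFactors (t : ℝ) :
    Tendsto (fun n : ℕ ↦ 𝔼 m ∈ Icc 1 n, Complex.exp (t *
      ((#m.primeFactors - Real.log (Real.log n)) / √(Real.log (Real.log n)) : ℝ) * Complex.I))
      atTop (𝓝 (charFun (gaussianReal 0 1) t)) := by
  set y : ℕ → ℝ := fun n ↦ √(Real.log (Real.log n)) with hy
  set z : ℕ → ℂ := fun n ↦ Complex.exp (t * Complex.I / y n) - 1 with hz
  have hphase (n : ℕ) : ‖Complex.exp (-(t * y n * Complex.I))‖ = 1 := by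
    simpa using Complex.norm_exp_ofReal_mul_I (-(t * y n))
  have hmodulus (n : ℕ) : ‖1 + z n‖ ≤ 1 := by
    simpa [hz, mul_div_right_comm] using (Complex.norm_exp_ofReal_mul_I (t / y n)).le
  have herror : Tendsto (fun n ↦ Complex.exp (-(t * y n * Complex.I)) *
      (𝔼 m ∈ Icc 1 n, (1 + z n) ^ #m.primeFactors -
        Complex.exp (primeReciprocalSum (sieveLevel n) * z n))) atTop (𝓝 0) := by
    rw [tendsto_zero_iff_norm_tendsto_zero]
    simpa [hphase] using (tendsto_expect_pow_card_primeFactors_sub_exp hmodulus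
      (isBigO_exp_I_mul_div_sub_one t atTop y)).norm
  have hmain := (Complex.continuous_exp.tendsto _).comp
    (tendsto_primeReciprocalSum_mul_exp_sub_one_sub t)
  have hlim : 0 + Complex.exp (-t ^ 2 / 2) = charFun (gaussianReal 0 1) t := by
    simp [charFun_gaussianReal, neg_div]
  refine hlim ▸ (herror.add hmain).congr' ?_
  filter_upwards [tendsto_log_log_natCast.eventually_gt_atTop 0] with n hn
  simp only [Function.comp_apply, expect_exp_normalized_eq _ _ t hn, hz, hy]
  rw [add_sub_cancel, mul_sub, ← Complex.exp_add, sub_add, sub_eq_self, sub_eq_zero]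
  congr 1
  ring

end CentralLimit

/-- Erdős–Kac theorem: the proportion of `m ≤ n` with
`ω(m) - ln ln n ≤ x·√(ln ln n)` tends to `Φ(x)`. -/
theorem erdos_kac (x : ℝ) :
    Tendsto
      (fun n : ℕ =>
        (((Finset.Icc 1 n).filter (fun m =>
            (m.primeFactors.card : ℝ) - Real.log (Real.log n) ≤
              x * Real.sqrt (Real.log (Real.log n)))).card : ℝ) / n)
      atTop (nhds (stdNormalCDF x)) := by
  have := nullSingletonClass_gaussianReal (μ := 0) one_ne_zero
  have hcdf := tendsto_card_filter_le_div_card_of_charFun (s := fun n ↦ Icc 1 n)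
    (eventually_atTop.2 ⟨1, fun n hn ↦ nonempty_Icc.2 hn⟩)
    tendsto_expect_exp_normalized_card_primeFactors (measure_singleton x)
  rw [gaussianReal_real_Iic_eq_stdNormalCDF] at hcdf
  refine hcdf.congr' ?_
  filter_upwards [tendsto_sqrt_log_log_natCast.eventually_gt_atTop 0] with n hn
  simp only [div_le_iff₀ hn, Nat.card_Icc, add_tsub_cancel_right]
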